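/- Let f, f̃ : ℝ → ℝ be functions, g a real constant, and T₀, T₁, X₀, X₁, X₂, U₀, U₁, U₂, U₃ real constants with T₁·(X₁U₂ − X₂U₁) ≠ 0. Let u : ℝ² → ℝ be a C² solution of u_t = f(u_x)·u_xx + g such that X₁ + X₂·u_x(t,x) ≠ 0 for all (t,x), and suppose f̃((U₁ + U₂p)/(X₁ + X₂p)) = ((X₁ + X₂p)²/T₁)·f(p) for every p in the range of u_x. Let v be a C² function on an open subset of ℝ² such that v(T₁t + T₀, X₁x + X₂·u(t,x) − X₂·g·t + X₀) = U₁x + U₂·u(t,x) + (1 − U₂)·g·t + U₃·t + (T₀/T₁)·g + U₀ for all (t,x). Then at every point (s, y) = (T₁t + T₀, X₁x + X₂u(t,x) − X₂gt + X₀), the function v satisfies v_s(s,y) = f̃(v_y(s,y))·v_{yy}(s,y) + (g + U₃)/T₁. -/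

import Mathlib

/-!
Fix `(t, x)` and write `p = u_x`, `D = X₁ + X₂ p`, `δ = X₁ U₂ - X₂ U₁`, and `(s, y)` for the image
point. The chain rule applied to the relation between `u` and `v` gives the transformed derivatives:

* differentiating in `x` gives `v_y = (U₁ + U₂ p) / D` at every image point;
* differentiating this identity in `x` once more gives `v_yy = δ u_xx / D ^ 3`;
* differentiating in `t` gives
  `T₁ v_s + X₂ (u_t - g) v_y = U₂ u_t + (1 - U₂) g + U₃`.

Since `u_t - g = f(p) u_xx`, the last identity reads `T₁ v_s = g + U₃ + δ f(p) u_xx / D`, and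
`f̃(v_y) v_yy = (D ^ 2 / T₁) f(p) δ u_xx / D ^ 3 = δ f(p) u_xx / (T₁ D)`, which is the equation for
`v`. The `C²` hypotheses enter only through the differentiability of `u`, `v` and of their
`x`-derivatives along lines `t = const` (`differentiableAt_deriv_of_contDiffAt_two`).
-/

/-- Partial derivative with respect to the first (time) variable. -/
noncomputable def pt (u : ℝ → ℝ → ℝ) (t x : ℝ) : ℝ := deriv (fun s => u s x) t

/-- Partial derivative with respect to the second (space) variable. -/
noncomputable def px (u : ℝ → ℝ → ℝ) (t x : ℝ) : ℝ := deriv (fun y => u t y) x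

/-- Second partial derivative with respect to the second (space) variable. -/
noncomputable def pxx (u : ℝ → ℝ → ℝ) (t x : ℝ) : ℝ :=
  deriv (fun y => deriv (fun z => u t z) y) x

/-- A `C²` function of one variable has a differentiable derivative. -/
theorem differentiableAt_deriv_of_contDiffAt_two {h : ℝ → ℝ} {y : ℝ} (hh : ContDiffAt ℝ 2 h y) :
    DifferentiableAt ℝ (deriv h) y := by
  have h1 : ContDiffAt ℝ 1 (fderiv ℝ h) y := hh.fderiv_right (by norm_num)
  exact (h1.differentiableAt (by norm_num)).clm_apply (differentiableAt_const (1 : ℝ))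

/-- The slice `y ↦ w t y` of a function that is `C²` at `(t, y)`. -/
theorem contDiffAt_slice {w : ℝ → ℝ → ℝ} {t y : ℝ}
    (hw : ContDiffAt ℝ 2 (fun p : ℝ × ℝ => w p.1 p.2) (t, y)) :
    ContDiffAt ℝ 2 (fun z => w t z) y :=
  ContDiffAt.comp (g := fun p : ℝ × ℝ => w p.1 p.2) (f := fun z => (t, z)) y hw
    (contDiffAt_const.prodMk contDiffAt_id)

theorem hasDerivAt_px {w : ℝ → ℝ → ℝ} {t y : ℝ}
    (hw : ContDiffAt ℝ 2 (fun p : ℝ × ℝ => w p.1 p.2) (t, y)) :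
    HasDerivAt (fun z => w t z) (px w t y) y :=
  ((contDiffAt_slice hw).differentiableAt (by norm_num)).hasDerivAt

theorem hasDerivAt_pxx {w : ℝ → ℝ → ℝ} {t y : ℝ}
    (hw : ContDiffAt ℝ 2 (fun p : ℝ × ℝ => w p.1 p.2) (t, y)) :
    HasDerivAt (fun z => px w t z) (pxx w t y) y :=
  (differentiableAt_deriv_of_contDiffAt_two (contDiffAt_slice hw)).hasDerivAt

/-- The chain rule for `w (a τ) (b τ)` in terms of the partial derivatives of `w`. -/
theorem hasDerivAt_comp_curve {w : ℝ → ℝ → ℝ} {a b : ℝ → ℝ} {a' b' τ : ℝ}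
    (hw : DifferentiableAt ℝ (fun p : ℝ × ℝ => w p.1 p.2) (a τ, b τ))
    (ha : HasDerivAt a a' τ) (hb : HasDerivAt b b' τ) :
    HasDerivAt (fun r => w (a r) (b r)) (a' * pt w (a τ) (b τ) + b' * px w (a τ) (b τ)) τ := by
  have hL := hw.hasFDerivAt
  set L := fderiv ℝ (fun p : ℝ × ℝ => w p.1 p.2) (a τ, b τ)
  have hpt : pt w (a τ) (b τ) = L (1, 0) :=
    (HasFDerivAt.comp_hasDerivAt (l := fun p : ℝ × ℝ => w p.1 p.2) (f := fun r => (r, b τ)) (a τ) hL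
      ((hasDerivAt_id (a τ)).prodMk (hasDerivAt_const (a τ) (b τ)))).deriv
  have hpx : px w (a τ) (b τ) = L (0, 1) :=
    (HasFDerivAt.comp_hasDerivAt (l := fun p : ℝ × ℝ => w p.1 p.2) (f := fun r => (a τ, r)) (b τ) hL
      ((hasDerivAt_const (b τ) (a τ)).prodMk (hasDerivAt_id (b τ)))).deriv
  have hcomp := HasFDerivAt.comp_hasDerivAt (l := fun p : ℝ × ℝ => w p.1 p.2)
    (f := fun r => (a r, b r)) τ hL (ha.prodMk hb)
  have hsplit : ((a', b') : ℝ × ℝ) = a' • ((1, 0) : ℝ × ℝ) + b' • ((0, 1) : ℝ × ℝ) := by simp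
  rw [hsplit, map_add, map_smul, map_smul, smul_eq_mul, smul_eq_mul, ← hpt, ← hpx] at hcomp
  exact hcomp

/-- The transformations constituting the effective generalized equivalence group
Ĝ∼_F of the class `u_t = f(u_x) u_xx + g` (g constant) map solutions to solutions:
t̃ = T₁t + T₀, x̃ = X₁x + X₂u − X₂gt + X₀,
ũ = U₁x + U₂u + (1 − U₂)gt + U₃t + (T₀/T₁)g + U₀,
f̃ = ((X₁ + X₂u_x)²/T₁) f, g̃ = (g + U₃)/T₁. -/
theorem effective_generalized_equivalence_group_F
    (f ftil : ℝ → ℝ) (g : ℝ)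
    (T₀ T₁ X₀ X₁ X₂ U₀ U₁ U₂ U₃ : ℝ) (hne : T₁ * (X₁ * U₂ - X₂ * U₁) ≠ 0)
    (u : ℝ → ℝ → ℝ)
    (hu : ContDiff ℝ 2 (fun p : ℝ × ℝ => u p.1 p.2))
    (hpde : ∀ t x, pt u t x = f (px u t x) * pxx u t x + g)
    (hden : ∀ t x, X₁ + X₂ * px u t x ≠ 0)
    (hftil : ∀ t x,
      ftil ((U₁ + U₂ * px u t x) / (X₁ + X₂ * px u t x)) =
        (X₁ + X₂ * px u t x) ^ 2 / T₁ * f (px u t x))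
    (Ω' : Set (ℝ × ℝ)) (hΩ' : IsOpen Ω')
    (v : ℝ → ℝ → ℝ)
    (hv : ContDiffOn ℝ 2 (fun p : ℝ × ℝ => v p.1 p.2) Ω')
    (hmem : ∀ t x, (T₁ * t + T₀, X₁ * x + X₂ * u t x - X₂ * g * t + X₀) ∈ Ω')
    (hrel : ∀ t x,
      v (T₁ * t + T₀) (X₁ * x + X₂ * u t x - X₂ * g * t + X₀) =
        U₁ * x + U₂ * u t x + (1 - U₂) * g * t + U₃ * t + (T₀ / T₁) * g + U₀) :
    ∀ t x,
      pt v (T₁ * t + T₀) (X₁ * x + X₂ * u t x - X₂ * g * t + X₀) =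
        ftil (px v (T₁ * t + T₀) (X₁ * x + X₂ * u t x - X₂ * g * t + X₀)) *
            pxx v (T₁ * t + T₀) (X₁ * x + X₂ * u t x - X₂ * g * t + X₀)
          + (g + U₃) / T₁ := by
  intro t x
  have hT : T₁ ≠ 0 := left_ne_zero_of_mul hne
  have hu2 : ∀ t x, ContDiffAt ℝ 2 (fun p : ℝ × ℝ => u p.1 p.2) (t, x) :=
    fun t x => hu.contDiffAt
  have hv2 : ∀ t x, ContDiffAt ℝ 2 (fun p : ℝ × ℝ => v p.1 p.2)
      (T₁ * t + T₀, X₁ * x + X₂ * u t x - X₂ * g * t + X₀) :=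
    fun t x => hv.contDiffAt (hΩ'.mem_nhds (hmem t x))
  have hY : ∀ x, HasDerivAt (fun z => X₁ * z + X₂ * u t z - X₂ * g * t + X₀)
      (X₁ + X₂ * px u t x) x := fun x => by
    simpa using ((((hasDerivAt_id x).const_mul X₁).add
      ((hasDerivAt_px (hu2 t x)).const_mul X₂)).sub_const (X₂ * g * t)).add_const X₀
  have hvy : ∀ x, px v (T₁ * t + T₀) (X₁ * x + X₂ * u t x - X₂ * g * t + X₀) =
      (U₁ + U₂ * px u t x) / (X₁ + X₂ * px u t x) := fun x => by
    have h1 := (hasDerivAt_px (hv2 t x)).comp x (hY x)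
    have h2 : HasDerivAt (fun z => U₁ * z + U₂ * u t z + (1 - U₂) * g * t + U₃ * t
        + (T₀ / T₁) * g + U₀) (U₁ + U₂ * px u t x) x := by
      simpa using (((((hasDerivAt_id x).const_mul U₁).add
        ((hasDerivAt_px (hu2 t x)).const_mul U₂)).add_const ((1 - U₂) * g * t)).add_const
          (U₃ * t)).add_const ((T₀ / T₁) * g) |>.add_const U₀
    rw [← funext (hrel t)] at h2
    rw [eq_div_iff (hden t x)]
    exact h1.unique h2
  have hvyy : pxx v (T₁ * t + T₀) (X₁ * x + X₂ * u t x - X₂ * g * t + X₀) =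
      (X₁ * U₂ - X₂ * U₁) * pxx u t x / (X₁ + X₂ * px u t x) ^ 3 := by
    have h1 := (hasDerivAt_pxx (hv2 t x)).comp x (hY x)
    have h2 := (((hasDerivAt_pxx (hu2 t x)).const_mul U₂).const_add U₁).div
      (((hasDerivAt_pxx (hu2 t x)).const_mul X₂).const_add X₁) (hden t x)
    have h3 := h1.unique (h2.congr_of_eventuallyEq (Filter.Eventually.of_forall hvy))
    have hD := hden t x
    rw [eq_div_iff (pow_ne_zero 2 hD)] at h3
    rw [eq_div_iff (pow_ne_zero 3 hD)]
    linear_combination h3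
  have hvs : T₁ * pt v (T₁ * t + T₀) (X₁ * x + X₂ * u t x - X₂ * g * t + X₀) +
      (X₂ * pt u t x - X₂ * g) * px v (T₁ * t + T₀) (X₁ * x + X₂ * u t x - X₂ * g * t + X₀) =
      U₂ * pt u t x + (1 - U₂) * g + U₃ := by
    have hut : HasDerivAt (fun r => u r x) (pt u t x) t := by
      have := hasDerivAt_comp_curve (w := u) (a := fun r => r) (b := fun _ => x)
        ((hu2 t x).differentiableAt (by norm_num)) (hasDerivAt_id' t) (hasDerivAt_const t x)
      simpa using this
    have hS : HasDerivAt (fun r => T₁ * r + T₀) T₁ t := by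
      simpa using ((hasDerivAt_id t).const_mul T₁).add_const T₀
    have hYt : HasDerivAt (fun r => X₁ * x + X₂ * u r x - X₂ * g * r + X₀)
        (X₂ * pt u t x - X₂ * g) t := by
      simpa using (((hut.const_mul X₂).const_add (X₁ * x)).sub
        ((hasDerivAt_id t).const_mul (X₂ * g))).add_const X₀
    have h1 := hasDerivAt_comp_curve (w := v) ((hv2 t x).differentiableAt (by norm_num)) hS hYt
    have h2 : HasDerivAt (fun r => U₁ * x + U₂ * u r x + (1 - U₂) * g * r + U₃ * r
        + (T₀ / T₁) * g + U₀) (U₂ * pt u t x + (1 - U₂) * g + U₃) t := by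
      simpa using (((((hut.const_mul U₂).const_add (U₁ * x)).add
        ((hasDerivAt_id t).const_mul ((1 - U₂) * g))).add
          ((hasDerivAt_id t).const_mul U₃)).add_const ((T₀ / T₁) * g)).add_const U₀
    exact h1.unique (h2.congr_of_eventuallyEq (Filter.Eventually.of_forall fun r => hrel r x))
  have hD := hden t x
  rw [hvy x, hpde t x] at hvs
  rw [hvy x, hftil t x, hvyy]
  -- Multiplying by `T₁` turns the goal into the formula for `T₁ v_s`.
  apply mul_left_cancel₀ hT
  rw [eq_sub_of_add_eq hvs]
  field_simp
  ring
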